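/- arXiv:math/0405124 — 2 statements merged into one kernel-verified Lean document; each statement's English description precedes it below -/
import Mathlib

section
/- Let D be an integral domain that is not a field and let ⋆ be a semistar operation on D. Then D is a ⋆-almost Dedekind domain if and only if D_P is a rank-one discrete valuation ring for every quasi-⋆_f-prime ideal P of D. -/
open scoped Pointwise

section SemistarDefs

variable {D : Type*} [CommRing D] [IsDomain D]
variable {K : Type*} [Field K] [Algebra D K] [IsFractionRing D K]

/-- `star` is a semistar operation on the integral domain `D` with quotient field `K`:
a map on (nonzero) `D`-submodules of `K` satisfying `(xE)^⋆ = x·E^⋆`, monotonicity,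
extensivity and idempotence. -/
structure IsSemistarOperation (star : Submodule D K → Submodule D K) : Prop where
  ne_bot : ∀ {E : Submodule D K}, E ≠ ⊥ → star E ≠ ⊥
  map_smul : ∀ (x : K), x ≠ 0 → ∀ {E : Submodule D K}, E ≠ ⊥ →
    star (Submodule.map (LinearMap.mulLeft D x) E) = Submodule.map (LinearMap.mulLeft D x) (star E)
  mono : ∀ {E F : Submodule D K}, E ≠ ⊥ → F ≠ ⊥ → E ≤ F → star E ≤ star F
  le_star : ∀ {E : Submodule D K}, E ≠ ⊥ → E ≤ star E
  star_star : ∀ {E : Submodule D K}, E ≠ ⊥ → star (star E) = star E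

/-- The image in `K` of an ideal `I` of `D`, as a `D`-submodule of `K`. -/
def idealExt (K : Type*) [Field K] [Algebra D K] (I : Ideal D) : Submodule D K :=
  Submodule.map (Algebra.linearMap D K) I

/-- `I` is a quasi-⋆-ideal: a nonzero ideal of `D` with `I = I^⋆ ∩ D`. -/
def QuasiStarIdeal (star : Submodule D K → Submodule D K) (I : Ideal D) : Prop :=
  I ≠ ⊥ ∧ Submodule.comap (Algebra.linearMap D K) (star (idealExt K I)) = I

/-- `P` is a quasi-⋆-prime: a prime ideal which is a quasi-⋆-ideal. -/
def QuasiStarPrime (star : Submodule D K → Submodule D K) (P : Ideal D) : Prop :=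
  P.IsPrime ∧ QuasiStarIdeal star P

/-- `M` is a quasi-⋆-maximal ideal: maximal in the set of proper quasi-⋆-ideals of `D`. -/
def QuasiStarMaximal (star : Submodule D K → Submodule D K) (M : Ideal D) : Prop :=
  QuasiStarIdeal star M ∧ M ≠ ⊤ ∧
    ∀ J : Ideal D, QuasiStarIdeal star J → J ≠ ⊤ → M ≤ J → J = M

/-- The finite-type semistar operation `⋆_f` associated to `⋆`:
`E^{⋆_f} = ⋃ { F^⋆ : F nonzero finitely generated, F ⊆ E }`. -/
def finTypeOp (star : Submodule D K → Submodule D K) : Submodule D K → Submodule D K :=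
  fun E => ⨆ (F : Submodule D K) (_ : F ≠ ⊥) (_ : F.FG) (_ : F ≤ E), star F

/-- The extension `E·D_Q` of a `D`-submodule `E` of `K` to the localization of `D` at
(the complement of) `Q`, described as `{ x ∈ K : s·x ∈ E for some s ∉ Q }`. -/
def extendToPrime (Q : Ideal D) (E : Submodule D K) : Submodule D K :=
  Submodule.span D {x : K | ∃ s : D, s ∉ Q ∧ algebraMap D K s * x ∈ E}

/-- The stable semistar operation of finite type `⋆̃` associated to `⋆`:
`E^⋆̃ = ⋂ { E·D_Q : Q a quasi-⋆_f-maximal ideal of D }`. -/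
def stableOp (star : Submodule D K → Submodule D K) : Submodule D K → Submodule D K :=
  fun E => ⨅ (Q : Ideal D) (_ : QuasiStarMaximal (finTypeOp star) Q), extendToPrime Q E

/-- A rank-one discrete valuation ring: a (domain which is a) local PID which is not a field. -/
def IsDVR (R : Type*) [CommRing R] : Prop :=
  ∃ h : IsDomain R, @IsDiscreteValuationRing R _ h

/-- A valuation domain. -/
def IsValuationDomain (R : Type*) [CommRing R] : Prop :=
  ∃ h : IsDomain R, @ValuationRing R _ h

/-- `D` is a ⋆-almost Dedekind domain: `D_M` is a rank-one discrete valuation ring for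
every quasi-⋆_f-maximal ideal `M` of `D`. -/
def StarADD (star : Submodule D K → Submodule D K) : Prop :=
  ∀ (M : Ideal D) [M.IsPrime], QuasiStarMaximal (finTypeOp star) M →
    IsDVR (Localization.AtPrime M)

/-- `D` is a Prüfer ⋆-multiplication domain: `D_M` is a valuation domain for every
quasi-⋆_f-maximal ideal `M` of `D`. -/
def StarPMD (star : Submodule D K → Submodule D K) : Prop :=
  ∀ (M : Ideal D) [M.IsPrime], QuasiStarMaximal (finTypeOp star) M →
    IsValuationDomain (Localization.AtPrime M)

/-- `D` is ⋆-Noetherian: ascending chain condition on quasi-⋆-ideals. -/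
def StarNoetherian (star : Submodule D K → Submodule D K) : Prop :=
  ∀ c : ℕ →o Ideal D, (∀ n, QuasiStarIdeal star (c n)) → ∃ n, ∀ m, n ≤ m → c m = c n

/-- `D` is a ⋆-Dedekind domain: ⋆-Noetherian and a P⋆MD. -/
def StarDedekind (star : Submodule D K → Submodule D K) : Prop :=
  StarNoetherian star ∧ StarPMD star

/-- `D` has the ⋆_f-finite character property: every nonzero element of `D` lies in only
finitely many quasi-⋆_f-maximal ideals. -/
def StarFiniteCharacter (star : Submodule D K → Submodule D K) : Prop :=
  ∀ d : D, d ≠ 0 → {M : Ideal D | QuasiStarMaximal (finTypeOp star) M ∧ d ∈ M}.Finite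

/-- The `v`-operation `E ↦ (D : (D : E))`. -/
def vOp : Submodule D K → Submodule D K := fun E => 1 / (1 / E)

/-- A nonzero `D`-submodule `E` of `K` is quasi-∗-invertible if `(E·(D^∗ : E))^∗ = D^∗`. -/
def QuasiStarInvertible (star : Submodule D K → Submodule D K) (E : Submodule D K) : Prop :=
  star (E * (star 1 / E)) = star (1 : Submodule D K)

/-- `D` has the ∗-cancellation law: for nonzero fractional ideals `A`, `B`, `C`,
`(AB)^∗ = (AC)^∗` implies `B^∗ = C^∗`. -/
def StarCancellation (star : Submodule D K → Submodule D K) : Prop :=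
  ∀ A B C : Submodule D K, A ≠ ⊥ → B ≠ ⊥ → C ≠ ⊥ →
    IsFractional (nonZeroDivisors D) A → IsFractional (nonZeroDivisors D) B →
    IsFractional (nonZeroDivisors D) C →
    star (A * B) = star (A * C) → star B = star C

/-- The ∗-dimension of `D`: the supremum of the lengths of chains of quasi-∗-prime ideals
of `D` (between `(0)` and a quasi-∗-prime). -/
noncomputable def starDim (star : Submodule D K → Submodule D K) : ℕ∞ :=
  ⨆ (k : ℕ) (_ : ∃ c : Fin k → Ideal D, StrictMono c ∧ ∀ i, QuasiStarPrime star (c i)),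
    (k : ℕ∞)

/-- A submodule `T` of `K` (containing the image of an integral domain with quotient
field `K`) is integrally closed (in `K`) if every `x ∈ K` satisfying a monic polynomial
equation with coefficients in `T` belongs to `T`. -/
def IntegrallyClosedSub (T : Submodule D K) : Prop :=
  ∀ x : K, (∃ (n : ℕ) (c : Fin n → K), (∀ i, c i ∈ T) ∧
    x ^ n = ∑ i : Fin n, c i * x ^ (i : ℕ)) → x ∈ T

/-- The content ideal `c(p)` of a polynomial: the ideal generated by its coefficients. -/
def contentIdeal (p : Polynomial D) : Ideal D := Ideal.span (Set.range p.coeff)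

/-- The multiplicative set `N(⋆) = { h ∈ D[X] : h ≠ 0, c(h)^⋆ = D^⋆ }` (as a submonoid,
via the closure of this multiplicatively closed set). -/
noncomputable def nagataMonoid (star : Submodule D K → Submodule D K) : Submonoid (Polynomial D) :=
  Submonoid.closure
    {p : Polynomial D | p ≠ 0 ∧ star (idealExt K (contentIdeal p)) = star (1 : Submodule D K)}

/-- The Nagata ring `Na(D,⋆) = D[X]_{N(⋆)}`. -/
abbrev NagataRing (star : Submodule D K → Submodule D K) :=
  Localization (nagataMonoid star)

/-- `V` is a valuation overring of `D` (inside the quotient field `K`): `D ⊆ V ⊆ K` and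
for every nonzero `x ∈ K`, `x ∈ V` or `x⁻¹ ∈ V`. -/
def IsValuationOverring (D : Type*) [CommRing D] {K : Type*} [Field K] [Algebra D K]
    (V : Subring K) : Prop :=
  (∀ d : D, algebraMap D K d ∈ V) ∧ ∀ x : K, x ≠ 0 → (x ∈ V ∨ x⁻¹ ∈ V)

/-- `V` is a ∗-valuation overring of `D`: a valuation overring such that `F^∗ ⊆ FV` for
every nonzero finitely generated `D`-submodule `F` of `K`. -/
def IsStarValuationOverring (star : Submodule D K → Submodule D K) (V : Subring K) : Prop :=
  IsValuationOverring D V ∧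
    ∀ F : Submodule D K, F ≠ ⊥ → F.FG →
      star F ≤ Submodule.span D ((F : Set K) * (V : Set K))

/-- `D` is a Krull domain: there is a family of rank-one discrete valuation overrings of `D`
with quotient field `K` whose intersection is `D`, with finite character. -/
def IsKrullDomain (D : Type*) [CommRing D] (K : Type*) [Field K] [Algebra D K] : Prop :=
  ∃ 𝒱 : Set (Subring K),
    (∀ V ∈ 𝒱, (∀ d : D, algebraMap D K d ∈ V) ∧ IsDVR V ∧
      ∀ x : K, ∃ a ∈ V, ∃ b ∈ V, b ≠ 0 ∧ x * b = a) ∧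
    (⋂ V ∈ 𝒱, (V : Set K)) = Set.range (algebraMap D K) ∧
    ∀ d : D, d ≠ 0 → {V ∈ 𝒱 | ¬ ∃ y ∈ V, algebraMap D K d * y = 1}.Finite

end SemistarDefs

section Helpers

variable {D : Type*} [CommRing D] [IsDomain D]
variable {K : Type*} [Field K] [Algebra D K] [IsFractionRing D K]

theorem finTypeOp_eq_sSup (star : Submodule D K → Submodule D K) (E : Submodule D K) :
    finTypeOp star E = sSup {G | ∃ F : Submodule D K, F ≠ ⊥ ∧ F.FG ∧ F ≤ E ∧ star F = G} := by
  apply le_antisymm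
  · refine iSup_le fun F => iSup_le fun h1 => iSup_le fun h2 => iSup_le fun h3 => ?_
    exact le_sSup ⟨F, h1, h2, h3, rfl⟩
  · refine sSup_le ?_
    rintro G ⟨F, h1, h2, h3, rfl⟩
    exact le_iSup_of_le F (le_iSup_of_le h1 (le_iSup_of_le h2 (le_iSup_of_le h3 le_rfl)))

theorem star_le_finTypeOp (star : Submodule D K → Submodule D K) {E F : Submodule D K}
    (h1 : F ≠ ⊥) (h2 : F.FG) (h3 : F ≤ E) : star F ≤ finTypeOp star E := by
  rw [finTypeOp_eq_sSup]
  exact le_sSup ⟨F, h1, h2, h3, rfl⟩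

theorem finTypeOp_mono (star : Submodule D K → Submodule D K) {E E' : Submodule D K}
    (h : E ≤ E') : finTypeOp star E ≤ finTypeOp star E' := by
  rw [finTypeOp_eq_sSup star E]
  refine sSup_le ?_
  rintro G ⟨F, h1, h2, h3, rfl⟩
  exact star_le_finTypeOp star h1 h2 (h3.trans h)

theorem exists_fg_of_le_finTypeOp {star : Submodule D K → Submodule D K}
    (hstar : IsSemistarOperation star) {E F : Submodule D K} (hE : E ≠ ⊥) (hF : F.FG)
    (h : F ≤ finTypeOp star E) : ∃ G : Submodule D K, G ≠ ⊥ ∧ G.FG ∧ G ≤ E ∧ F ≤ star G := by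
  rw [finTypeOp_eq_sSup] at h
  have hc := (Submodule.fg_iff_compact F).1 hF
  rw [CompleteLattice.isCompactElement_iff_le_of_directed_sSup_le] at hc
  have key := hc _ ?_ ?_ h
  · obtain ⟨_, ⟨G, h1, h2, h3, rfl⟩, h4⟩ := key
    exact ⟨G, h1, h2, h3, h4⟩
  · obtain ⟨x, hx, hx0⟩ := Submodule.exists_mem_ne_zero_of_ne_bot hE
    exact ⟨_, Submodule.span D {x}, by simpa using hx0, Submodule.fg_span_singleton x,
      by simpa using hx, rfl⟩
  · rintro _ ⟨A, a1, a2, a3, rfl⟩ _ ⟨B, b1, b2, b3, rfl⟩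
    have hne : A ⊔ B ≠ ⊥ := ne_bot_of_le_ne_bot a1 le_sup_left
    exact ⟨_, ⟨A ⊔ B, hne, a2.sup b2, sup_le a3 b3, rfl⟩,
      hstar.mono a1 hne le_sup_left, hstar.mono b1 hne le_sup_right⟩

theorem mem_finTypeOp {star : Submodule D K → Submodule D K}
    (hstar : IsSemistarOperation star) {E : Submodule D K} (hE : E ≠ ⊥) {x : K}
    (h : x ∈ finTypeOp star E) : ∃ G : Submodule D K, G ≠ ⊥ ∧ G.FG ∧ G ≤ E ∧ x ∈ star G := by
  obtain ⟨G, h1, h2, h3, h4⟩ := exists_fg_of_le_finTypeOp hstar hE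
    (Submodule.fg_span_singleton x) (by simpa using h)
  exact ⟨G, h1, h2, h3, by simpa using h4⟩

theorem le_finTypeOp {star : Submodule D K → Submodule D K}
    (hstar : IsSemistarOperation star) (E : Submodule D K) : E ≤ finTypeOp star E := by
  intro x hx
  by_cases hx0 : x = 0
  · simp [hx0]
  · have hne : Submodule.span D {x} ≠ ⊥ := by simpa using hx0
    exact star_le_finTypeOp star hne (Submodule.fg_span_singleton x) (by simpa using hx)
      (hstar.le_star hne (Submodule.mem_span_singleton_self x))

theorem finTypeOp_idem {star : Submodule D K → Submodule D K}
    (hstar : IsSemistarOperation star) {E : Submodule D K} (hE : E ≠ ⊥) :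
    finTypeOp star (finTypeOp star E) ≤ finTypeOp star E := by
  intro x hx
  obtain ⟨F, h1, h2, h3, h4⟩ :=
    mem_finTypeOp hstar (ne_bot_of_le_ne_bot hE (le_finTypeOp hstar E)) hx
  obtain ⟨G, g1, g2, g3, g4⟩ := exists_fg_of_le_finTypeOp hstar hE h2 h3
  have := hstar.mono h1 (hstar.ne_bot g1) g4
  rw [hstar.star_star g1] at this
  exact star_le_finTypeOp star g1 g2 g3 (this h4)

theorem finTypeOp_mul_mem {star : Submodule D K → Submodule D K}
    (hstar : IsSemistarOperation star) {E E' : Submodule D K} (hE : E ≠ ⊥) {b : K} (hb : b ≠ 0)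
    (h : ∀ y ∈ E, b * y ∈ E') {x : K} (hx : x ∈ finTypeOp star E) :
    b * x ∈ finTypeOp star E' := by
  obtain ⟨F, h1, h2, h3, h4⟩ := mem_finTypeOp hstar hE hx
  have hinj : Function.Injective (LinearMap.mulLeft D b) := fun u v huv =>
    mul_left_cancel₀ hb huv
  have hne : F.map (LinearMap.mulLeft D b) ≠ ⊥ := by
    intro h0
    exact h1 (Submodule.map_injective_of_injective hinj (h0.trans (Submodule.map_bot _).symm))
  refine star_le_finTypeOp star hne (h2.map _) ?_ ?_
  · rintro _ ⟨y, hy, rfl⟩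
    exact h y (h3 hy)
  · rw [hstar.map_smul b hb h1]
    exact ⟨x, h4, rfl⟩

theorem idealExt_ne_bot {I : Ideal D} (h : I ≠ ⊥) : idealExt K I ≠ ⊥ := by
  intro h0
  have hinj : Function.Injective (Algebra.linearMap D K) := IsFractionRing.injective D K
  exact h (Submodule.map_injective_of_injective hinj (h0.trans (Submodule.map_bot _).symm))

theorem le_comap_finTypeOp {star : Submodule D K → Submodule D K}
    (hstar : IsSemistarOperation star) (I : Ideal D) :
    I ≤ Submodule.comap (Algebra.linearMap D K) (finTypeOp star (idealExt K I)) := fun x hx =>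
  le_finTypeOp hstar _ (Submodule.mem_map_of_mem hx)

theorem quasi_comap {star : Submodule D K → Submodule D K}
    (hstar : IsSemistarOperation star) {I : Ideal D} (hI : I ≠ ⊥) :
    QuasiStarIdeal (finTypeOp star)
      (Submodule.comap (Algebra.linearMap D K) (finTypeOp star (idealExt K I)) : Ideal D) := by
  refine ⟨ne_bot_of_le_ne_bot hI (le_comap_finTypeOp hstar I), le_antisymm ?_ 
    (le_comap_finTypeOp hstar _)⟩
  apply Submodule.comap_mono
  refine (finTypeOp_mono star ?_).trans (finTypeOp_idem hstar (idealExt_ne_bot hI))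
  exact Submodule.map_comap_le _ _

theorem quasiMaximal_isPrime {star : Submodule D K → Submodule D K}
    (hstar : IsSemistarOperation star) {M : Ideal D}
    (hM : QuasiStarMaximal (finTypeOp star) M) : M.IsPrime := by
  obtain ⟨⟨hM0, hMq⟩, hMt, hmax⟩ := hM
  refine ⟨hMt, fun {a b} hab => ?_⟩
  by_contra! hcon
  obtain ⟨ha, hb⟩ := hcon
  have hb0 : b ≠ 0 := fun h => hb (h ▸ M.zero_mem)
  set I : Ideal D := M ⊔ Ideal.span {a} with hI
  have hI0 : I ≠ ⊥ := ne_bot_of_le_ne_bot hM0 le_sup_left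
  have hIle := le_comap_finTypeOp (K := K) hstar I
  have haI : a ∈ I := (le_sup_right : _ ≤ I) (Ideal.mem_span_singleton_self a)
  have htop : Submodule.comap (Algebra.linearMap D K) (finTypeOp star (idealExt K I)) = ⊤ := by
    by_contra hne
    have := hmax _ (quasi_comap hstar hI0) hne (le_sup_left.trans hIle)
    exact ha (this ▸ hIle haI)
  have h1 : (1 : D) ∈ Submodule.comap (Algebra.linearMap D K) (finTypeOp star (idealExt K I)) := by
    rw [htop]; trivial
  have hbK : algebraMap D K b ≠ 0 := by simpa using hb0
  have h2 : algebraMap D K b * algebraMap D K 1 ∈ finTypeOp star (idealExt K M) := by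
    refine finTypeOp_mul_mem hstar (idealExt_ne_bot hI0) hbK ?_ h1
    rintro _ ⟨y, hy, rfl⟩
    refine ⟨b * y, ?_, by simp⟩
    obtain ⟨m, hm, z, hz, rfl⟩ := Submodule.mem_sup.1 hy
    obtain ⟨c, rfl⟩ := Ideal.mem_span_singleton'.1 hz
    have : b * (m + c * a) = b * m + c * (a * b) := by ring
    rw [this]
    exact M.add_mem (M.mul_mem_left _ hm) (M.mul_mem_left _ hab)
  apply hb
  rw [← hMq]
  simpa using h2

theorem exists_quasiMaximal {star : Submodule D K → Submodule D K}
    (hstar : IsSemistarOperation star) {P : Ideal D} (hP : QuasiStarIdeal (finTypeOp star) P)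
    (hPt : P ≠ ⊤) : ∃ M, P ≤ M ∧ QuasiStarMaximal (finTypeOp star) M := by
  have key := zorn_le_nonempty₀
    {I : Ideal D | QuasiStarIdeal (finTypeOp star) I ∧ I ≠ ⊤} ?_ P ⟨hP, hPt⟩
  · obtain ⟨M, hPM, hM⟩ := key
    refine ⟨M, hPM, hM.prop.1, hM.prop.2, fun J h1 h2 h3 => ?_⟩
    exact le_antisymm (hM.le_of_ge ⟨h1, h2⟩ h3) h3
  · intro c hc hchain y hy
    have hcne : c.Nonempty := ⟨y, hy⟩
    have hS0 : sSup c ≠ ⊥ := ne_bot_of_le_ne_bot (hc hy).1.1 (le_sSup hy)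
    refine ⟨sSup c, ⟨⟨hS0, le_antisymm ?_ (le_comap_finTypeOp hstar _)⟩, ?_⟩,
      fun z hz => le_sSup hz⟩
    · intro x hx
      obtain ⟨F, h1, h2, h3, h4⟩ := mem_finTypeOp hstar (idealExt_ne_bot hS0) hx
      have hcpt := (Submodule.fg_iff_compact F).1 h2
      rw [CompleteLattice.isCompactElement_iff_le_of_directed_sSup_le] at hcpt
      have key := hcpt (idealExt K '' c) (hcne.image _) ?_ ?_
      · obtain ⟨_, ⟨I, hI, rfl⟩, hFI⟩ := key
        have : x ∈ I := by
          rw [← (hc hI).1.2]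
          exact star_le_finTypeOp star h1 h2 hFI h4
        exact le_sSup hI this
      · rintro _ ⟨A, hA, rfl⟩ _ ⟨B, hB, rfl⟩
        obtain ⟨C, hC, h, h'⟩ := hchain.directedOn A hA B hB
        exact ⟨_, ⟨C, hC, rfl⟩, Submodule.map_mono h, Submodule.map_mono h'⟩
      · refine h3.trans ?_
        rw [idealExt, sSup_eq_iSup, Submodule.map_iSup]
        refine iSup_le fun A => ?_
        rw [Submodule.map_iSup]
        exact iSup_le fun hA => le_sSup ⟨A, hA, rfl⟩
    · intro htop
      have h1 : (1 : D) ∈ sSup c := by rw [htop]; trivial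
      obtain ⟨I, hI, h⟩ := (Submodule.mem_sSup_of_directed hcne hchain.directedOn).1 h1
      exact (hc hI).2 ((Ideal.eq_top_iff_one I).2 h)

theorem eq_of_isDVR_atPrime {P M : Ideal D} [P.IsPrime] [M.IsPrime] (hP : P ≠ ⊥) (h : P ≤ M)
    (hd : IsDVR (Localization.AtPrime M)) : P = M := by
  obtain ⟨_, hd⟩ := hd
  have hpr : (P.map (algebraMap D (Localization.AtPrime M))).IsPrime :=
    Ideal.isPrime_map_of_isLocalizationAtPrime M h
  have hu := Ideal.under_map_of_isLocalizationAtPrime (S := Localization.AtPrime M) M h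
  have hne : P.map (algebraMap D (Localization.AtPrime M)) ≠ ⊥ := by
    intro h0
    rw [Ideal.map_eq_bot_iff_of_injective
      (IsLocalization.injective _ M.primeCompl_le_nonZeroDivisors)] at h0
    exact hP h0
  have hmx := IsLocalRing.eq_maximalIdeal (hpr.isMaximal hne)
  rw [← hu, hmx]
  exact Localization.AtPrime.under_maximalIdeal

end Helpers

section Statement

variable {D : Type*} [CommRing D] [IsDomain D]
variable {K : Type*} [Field K] [Algebra D K] [IsFractionRing D K]

/-- `D` an integral domain that is not a field, `⋆` a semistar operation on
`D`. Then `D` is a ⋆-almost Dedekind domain iff `D_P` is a rank-one discrete valuation ring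
for every quasi-⋆_f-prime ideal `P` of `D`. -/
theorem starADD_iff_dvr_at_quasiStarFinPrimes
    (hD : ¬ IsField D) (star : Submodule D K → Submodule D K)
    (hstar : IsSemistarOperation star) :
    StarADD star ↔
      ∀ (P : Ideal D) [P.IsPrime], QuasiStarIdeal (finTypeOp star) P →
        IsDVR (Localization.AtPrime P) := by
  constructor
  · intro h P hPp hP
    obtain ⟨M, hPM, hM⟩ := exists_quasiMaximal hstar hP hPp.ne_top
    haveI := quasiMaximal_isPrime hstar hM
    have hd := h M hM
    have := eq_of_isDVR_atPrime hP.1 hPM hd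
    subst this
    exact hd
  · intro h M _ hM
    exact h M hM.1

end Statement
end

section
/- Let D be an integral domain that is not a field and let ⋆ be a semistar operation on D. If D is a ⋆-almost Dedekind domain, then D is a Prüfer ⋆-multiplication domain and every quasi-⋆_f-prime ideal of D is a quasi-⋆_f-maximal ideal of D. -/
open scoped Pointwise

section Helpers

variable {D : Type*} [CommRing D] [IsDomain D]
variable {K : Type*} [Field K] [Algebra D K] [IsFractionRing D K]

lemma aux_fin {star : Submodule D K → Submodule D K} (hs : IsSemistarOperation star)
    {E G : Submodule D K} (hE : E ≠ ⊥) (hG : G.FG) (h : G ≤ finTypeOp star E) :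
    ∃ F : Submodule D K, F ≠ ⊥ ∧ F.FG ∧ F ≤ E ∧ G ≤ star F := by
  have hc := (Submodule.fg_iff_compact G).1 hG
  let S : Set (Submodule D K) := {H | ∃ F : Submodule D K, F ≠ ⊥ ∧ F.FG ∧ F ≤ E ∧ H = star F}
  have h1 : finTypeOp star E ≤ sSup S := by
    unfold finTypeOp
    refine iSup_le fun F => iSup_le fun h1 => iSup_le fun h2 => iSup_le fun h3 => ?_
    exact le_sSup ⟨F, h1, h2, h3, rfl⟩
  have hne : S.Nonempty := by
    obtain ⟨x, hx, hx0⟩ := Submodule.exists_mem_ne_zero_of_ne_bot hE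
    refine ⟨_, Submodule.span D {x}, ?_, Submodule.fg_span_singleton x, ?_, rfl⟩
    · simpa using hx0
    · simpa using hx
  have hd : DirectedOn (· ≤ ·) S := by
    rintro _ ⟨F, a1, a2, a3, rfl⟩ _ ⟨F', b1, b2, b3, rfl⟩
    have hb : F ⊔ F' ≠ ⊥ := fun h => a1 (eq_bot_iff.2 (h ▸ le_sup_left))
    exact ⟨_, ⟨F ⊔ F', hb, a2.sup b2, sup_le a3 b3, rfl⟩,
      hs.mono a1 hb le_sup_left, hs.mono b1 hb le_sup_right⟩
  obtain ⟨_, ⟨F, a1, a2, a3, rfl⟩, h⟩ :=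
    (CompleteLattice.isCompactElement_iff_le_of_directed_sSup_le _ _).1 hc S hne hd (h.trans h1)
  exact ⟨F, a1, a2, a3, h⟩

lemma aux_mem {star : Submodule D K → Submodule D K} (hs : IsSemistarOperation star)
    {E : Submodule D K} (hE : E ≠ ⊥) {x : K} (h : x ∈ finTypeOp star E) :
    ∃ F : Submodule D K, F ≠ ⊥ ∧ F.FG ∧ F ≤ E ∧ x ∈ star F := by
  obtain ⟨F, a, b, c, d⟩ := aux_fin hs hE (Submodule.fg_span_singleton x) (by simpa using h)
  exact ⟨F, a, b, c, by simpa using d⟩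

lemma aux_le {star : Submodule D K → Submodule D K}
    {E F : Submodule D K} (a : F ≠ ⊥) (b : F.FG) (c : F ≤ E) : star F ≤ finTypeOp star E :=
  le_iSup_of_le F (le_iSup_of_le a (le_iSup_of_le b (le_iSup_of_le c le_rfl)))

lemma aux_self {star : Submodule D K → Submodule D K} (hs : IsSemistarOperation star)
    (E : Submodule D K) : E ≤ finTypeOp star E := by
  intro x hx
  by_cases h : x = 0
  · simp [h]
  have h0 : Submodule.span D {x} ≠ ⊥ := by simpa using h
  exact aux_le h0 (Submodule.fg_span_singleton x) (by simpa using hx)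
    (hs.le_star h0 (Submodule.mem_span_singleton_self x))

lemma aux_map0 {A B : Type*} [AddCommGroup A] [AddCommGroup B] [Module D A] [Module D B]
    {f : A →ₗ[D] B} (hf : Function.Injective f) {p : Submodule D A} (h : p.map f = ⊥) : p = ⊥ :=
  Submodule.map_injective_of_injective hf (by simpa using h)

lemma aux_ne {I : Ideal D} (hI : I ≠ ⊥) : idealExt K I ≠ ⊥ := by
  intro h
  apply hI
  exact aux_map0 (IsFractionRing.injective D K) h

lemma aux_closure {star : Submodule D K → Submodule D K} (hs : IsSemistarOperation star)
    {I : Ideal D} (hI : I ≠ ⊥) :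
    I ≤ Submodule.comap (Algebra.linearMap D K) (finTypeOp star (idealExt K I)) ∧
    QuasiStarIdeal (finTypeOp star)
      (Submodule.comap (Algebra.linearMap D K) (finTypeOp star (idealExt K I))) := by
  have hle : ∀ I : Ideal D,
      I ≤ Submodule.comap (Algebra.linearMap D K) (finTypeOp star (idealExt K I)) := fun I x hx =>
    aux_self hs _ (Submodule.mem_map_of_mem hx)
  refine ⟨hle I, ?_, le_antisymm ?_ (hle _)⟩
  · exact fun h => hI (eq_bot_iff.2 (h ▸ hle I))
  · set J := Submodule.comap (Algebra.linearMap D K) (finTypeOp star (idealExt K I)) with hJ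
    have hJ0 : J ≠ ⊥ := fun h => hI (eq_bot_iff.2 (h ▸ hle I))
    intro x hx
    obtain ⟨G, g1, g2, g3, g4⟩ := aux_mem hs (aux_ne hJ0) hx
    have : G ≤ finTypeOp star (idealExt K I) := g3.trans (Submodule.map_comap_le _ _)
    obtain ⟨F, f1, f2, f3, f4⟩ := aux_fin hs (aux_ne hI) g2 this
    have h5 := hs.mono g1 (hs.ne_bot f1) f4 g4
    rw [hs.star_star f1] at h5
    exact aux_le f1 f2 f3 h5

lemma aux_prime {star : Submodule D K → Submodule D K} (hs : IsSemistarOperation star)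
    {M : Ideal D} (hM : QuasiStarMaximal (finTypeOp star) M) : M.IsPrime := by
  refine ⟨hM.2.1, ?_⟩
  intro a b hab
  by_contra! hcon
  obtain ⟨ha, hb⟩ := hcon
  have hI : M ⊔ Ideal.span {a} ≠ ⊥ := fun h => hM.1.1 (eq_bot_iff.2 (h ▸ le_sup_left))
  obtain ⟨c1, c2⟩ := aux_closure (K := K) hs hI
  have h1 : (1 : D) ∈ Submodule.comap (Algebra.linearMap D K)
      (finTypeOp star (idealExt K (M ⊔ Ideal.span {a}))) := by
    by_contra h1
    have := hM.2.2 _ c2 (fun h => h1 (h ▸ Submodule.mem_top)) (le_sup_left.trans c1)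
    apply ha
    rw [← this]
    exact c1 (Ideal.mem_sup_right (Ideal.mem_span_singleton_self a))
  obtain ⟨F, f1, f2, f3, f4⟩ := aux_mem hs (aux_ne hI) h1
  have hb0 : algebraMap D K b ≠ 0 := by
    intro h
    apply hb
    have : b = 0 := IsFractionRing.injective D K (by simpa using h)
    simp [this]
  apply hb
  rw [← hM.1.2]
  change algebraMap D K b ∈ finTypeOp star (idealExt K M)
  have hinj : Function.Injective (LinearMap.mulLeft D (algebraMap D K b)) :=
    fun x y h => mul_left_cancel₀ hb0 h
  have g1 : Submodule.map (LinearMap.mulLeft D (algebraMap D K b)) F ≠ ⊥ :=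
    fun h => f1 (aux_map0 hinj h)
  have g2 : Submodule.map (LinearMap.mulLeft D (algebraMap D K b)) F ≤ idealExt K M := by
    rintro _ ⟨x, hx, rfl⟩
    obtain ⟨y, hy, rfl⟩ := f3 hx
    refine ⟨b * y, ?_, by simp⟩
    obtain ⟨m, hm, z, hz, rfl⟩ := Submodule.mem_sup.1 hy
    obtain ⟨w, rfl⟩ := Ideal.mem_span_singleton'.1 hz
    have : b * (m + w * a) = b * m + w * (a * b) := by ring
    rw [this]
    exact M.add_mem (M.mul_mem_left _ hm) (M.mul_mem_left _ hab)
  refine aux_le g1 (f2.map _) g2 ?_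
  rw [hs.map_smul _ hb0 f1]
  exact ⟨_, f4, by simp⟩

lemma aux_zorn {star : Submodule D K → Submodule D K} (hs : IsSemistarOperation star)
    {P : Ideal D} (hP : QuasiStarIdeal (finTypeOp star) P) (hP1 : P ≠ ⊤) :
    ∃ M, P ≤ M ∧ QuasiStarMaximal (finTypeOp star) M := by
  obtain ⟨M, hPM, hM⟩ := zorn_le_nonempty₀
    {J : Ideal D | QuasiStarIdeal (finTypeOp star) J ∧ J ≠ ⊤} (by
      intro c hc hchain y hy
      have hd : DirectedOn (· ≤ ·) c := hchain.directedOn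
      have hn : sSup c ≠ ⊥ := fun h => (hc hy).1.1 (eq_bot_iff.2 (h ▸ le_sSup hy))
      refine ⟨sSup c, ⟨⟨hn, le_antisymm ?_ (aux_closure hs hn).1⟩, ?_⟩, fun z hz => le_sSup hz⟩
      · intro x hx
        obtain ⟨F, f1, f2, f3, f4⟩ := aux_mem hs (aux_ne hn) hx
        let S : Set (Submodule D K) := idealExt K '' c
        have hFS : F ≤ sSup S := by
          refine f3.trans ?_
          unfold idealExt
          rw [(Submodule.gc_map_comap _).l_sSup, sSup_image]
          exact le_rfl
        have hdS : DirectedOn (· ≤ ·) S := by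
          rintro _ ⟨I, hI, rfl⟩ _ ⟨J, hJ, rfl⟩
          obtain ⟨L, hL, h1, h2⟩ := hd I hI J hJ
          exact ⟨_, ⟨L, hL, rfl⟩, Submodule.map_mono h1, Submodule.map_mono h2⟩
        obtain ⟨_, ⟨I, hI, rfl⟩, h⟩ :=
          (CompleteLattice.isCompactElement_iff_le_of_directed_sSup_le _ _).1
            ((Submodule.fg_iff_compact F).1 f2) S ⟨_, y, hy, rfl⟩ hdS hFS
        apply le_sSup hI
        rw [← (hc hI).1.2]
        exact aux_le f1 f2 h f4
      · intro h
        have h1 : (1 : D) ∈ sSup c := h ▸ Submodule.mem_top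
        obtain ⟨I, hI, h⟩ := (Submodule.mem_sSup_of_directed ⟨y, hy⟩ hd).1 h1
        exact (hc hI).2 ((Ideal.eq_top_iff_one I).2 h)) P ⟨hP, hP1⟩
  exact ⟨M, hPM, hM.1.1, hM.1.2, fun J h1 h2 h3 => le_antisymm (hM.2 ⟨h1, h2⟩ h3) h3⟩

lemma aux_dvr {P M : Ideal D} [hP : P.IsPrime] [M.IsPrime] (h0 : P ≠ ⊥) (h : P ≤ M)
    (hd : IsDVR (Localization.AtPrime M)) : P = M := by
  obtain ⟨_, _⟩ := hd
  have hdis : Disjoint (M.primeCompl : Set D) (P : Set D) :=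
    Set.disjoint_left.2 fun x hx hxP => hx (h hxP)
  have h1 := IsLocalization.isPrime_of_isPrime_disjoint M.primeCompl (Localization.AtPrime M) P hP hdis
  have h2 := IsLocalization.comap_map_of_isPrime_disjoint M.primeCompl (Localization.AtPrime M) hP hdis
  have h3 : P.map (algebraMap D (Localization.AtPrime M)) ≠ ⊥ := by
    intro h
    apply h0
    refine (Ideal.map_eq_bot_iff_of_injective ?_).1 h
    exact IsLocalization.injective _ M.primeCompl_le_nonZeroDivisors
  have h4 := IsLocalRing.eq_maximalIdeal (Ring.DimensionLEOne.maximalOfPrime h3 h1)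
  rw [← h2, h4]
  exact Localization.AtPrime.under_maximalIdeal

end Helpers

section Statement

variable {D : Type*} [CommRing D] [IsDomain D]
variable {K : Type*} [Field K] [Algebra D K] [IsFractionRing D K]

/-- `D` an integral domain that is not a field, `⋆` a semistar operation on
`D`. If `D` is a ⋆-almost Dedekind domain, then `D` is a Prüfer ⋆-multiplication domain and
every quasi-⋆_f-prime ideal of `D` is a quasi-⋆_f-maximal ideal of `D`. -/
theorem starADD_implies_starPMD_and_quasiPrimes_are_maximal
    (hD : ¬ IsField D) (star : Submodule D K → Submodule D K)
    (hstar : IsSemistarOperation star) (hADD : StarADD star) :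
    StarPMD star ∧
      ∀ P : Ideal D, QuasiStarPrime (finTypeOp star) P → QuasiStarMaximal (finTypeOp star) P := by
  refine ⟨?_, ?_⟩
  · intro M _ hM
    obtain ⟨h1, h2⟩ := hADD M hM
    exact ⟨h1, inferInstance⟩
  · intro P hP
    have := hP.1
    obtain ⟨M, hPM, hM⟩ := aux_zorn hstar hP.2 hP.1.ne_top
    have := aux_prime hstar hM
    rw [aux_dvr hP.2.1 hPM (hADD M hM)]
    exact hM

end Statement
end
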